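/- Let (X_t) be the lazy random walk Metropolis chain on {0,1}^n for π(x)=θ^{S(x)}(1+θ)^{-n}, S_t = S(X_t), started at S_0 = v. Then for any s > 0 and γ = 1 − (1+θ)/(2n): P_v{S_t ≥ E_v S_t + s} ≤ exp(−(2/9) s² (1 − γ²)) and P_v{S_t ≤ E_v S_t − s} ≤ exp(−(2/9) s² (1 − γ²)). -/

import Mathlib

open Finset
open scoped Classical

/-- number of ones of a vertex of the hypercube -/
def numOnes {n : ℕ} (x : Fin n → Bool) : ℕ :=
  (Finset.univ.filter fun i => x i = true).card

/-- Hamming distance -/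
def ham {n : ℕ} (x y : Fin n → Bool) : ℕ :=
  (Finset.univ.filter fun i => x i ≠ y i).card

/-- Transition kernel of the lazy random walk Metropolis chain for
`π(x) = θ^{S(x)}(1+θ)^{-n}`. -/
noncomputable def metroP (n : ℕ) (θ : ℝ) (x y : Fin n → Bool) : ℝ :=
  if y = x then 1 / 2 + ((n : ℝ) - numOnes x) / (2 * n) * (1 - θ)
  else if ham x y = 1 then
    (if numOnes y < numOnes x then 1 / (2 * n) else θ / (2 * n))
  else 0

/-- The vertex `y` with its `i`-th coordinate flipped. -/
def flipAt {n : ℕ} (y : Fin n → Bool) (i : Fin n) : Fin n → Bool :=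
  Function.update y i (!y i)

lemma flipAt_self {n : ℕ} (y : Fin n → Bool) (i : Fin n) : flipAt y i i = !y i := by
  simp [flipAt]

lemma flipAt_of_ne {n : ℕ} (y : Fin n → Bool) {i j : Fin n} (h : j ≠ i) :
    flipAt y i j = y j := by
  simp [flipAt, h]

lemma flipAt_ne {n : ℕ} (y : Fin n → Bool) (i : Fin n) : flipAt y i ≠ y := fun h => by
  have := congrFun h i
  simp [flipAt_self] at this

lemma flipAt_injective {n : ℕ} (y : Fin n → Bool) : Function.Injective (flipAt y) := by
  intro i j h
  by_contra hij
  have := congrFun h i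
  simp [flipAt_self, flipAt_of_ne y hij] at this

lemma ham_eq_one_iff {n : ℕ} (y x : Fin n → Bool) : ham y x = 1 ↔ ∃ i, x = flipAt y i := by
  unfold ham
  rw [Finset.card_eq_one]
  refine exists_congr fun i => ?_
  constructor
  · intro h
    funext j
    have hj := Finset.ext_iff.1 h j
    simp only [Finset.mem_filter, Finset.mem_univ, true_and, Finset.mem_singleton] at hj
    by_cases hji : j = i
    · subst hji
      rw [flipAt_self]
      have := hj.2 rfl
      revert this
      cases y j <;> cases x j <;> simp
    · rw [flipAt_of_ne y hji]
      by_contra hne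
      exact hji (hj.1 fun h => hne h.symm)
  · rintro rfl
    ext j
    by_cases hji : j = i
    · subst hji
      simp [flipAt_self]
    · simp [flipAt_of_ne y hji, hji]

lemma numOnes_cast {n : ℕ} (x : Fin n → Bool) :
    (numOnes x : ℝ) = ∑ i, if x i = true then (1 : ℝ) else 0 := by
  simp [numOnes]

lemma numOnes_le {n : ℕ} (x : Fin n → Bool) : (numOnes x : ℝ) ≤ n := by
  have h : numOnes x ≤ n := (Finset.card_le_univ _).trans (by simp)
  exact_mod_cast h

lemma numOnes_flipAt {n : ℕ} (y : Fin n → Bool) (i : Fin n) :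
    (numOnes (flipAt y i) : ℝ) = numOnes y + if y i = true then -1 else 1 := by
  rw [← sub_eq_iff_eq_add', numOnes_cast, numOnes_cast, ← Finset.sum_sub_distrib,
    Finset.sum_eq_single i]
  · rw [flipAt_self]
    cases y i <;> simp
  · intro j _ hj
    rw [flipAt_of_ne y hj, sub_self]
  · simp

lemma numOnes_flipAt_lt_iff {n : ℕ} (y : Fin n → Bool) (i : Fin n) :
    numOnes (flipAt y i) < numOnes y ↔ y i = true := by
  rw [← Nat.cast_lt (α := ℝ), numOnes_flipAt]
  split_ifs with h <;> simp [h]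

lemma metroP_eq {n : ℕ} (θ : ℝ) (y x : Fin n → Bool) :
    metroP n θ y x =
      (if x = y then 1 / 2 + ((n : ℝ) - numOnes y) / (2 * n) * (1 - θ) else 0) +
      ∑ i, if x = flipAt y i then (if y i = true then 1 / (2 * (n : ℝ)) else θ / (2 * n))
        else 0 := by
  unfold metroP
  by_cases hxy : x = y
  · subst hxy
    simp [(flipAt_ne x _).symm]
  by_cases hh : ham y x = 1
  · obtain ⟨i, rfl⟩ := (ham_eq_one_iff y x).1 hh
    simp [hh, hxy, numOnes_flipAt_lt_iff, (flipAt_injective y).eq_iff]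
  · have hne : ∀ i, x ≠ flipAt y i := fun i hi => hh ((ham_eq_one_iff y x).2 ⟨i, hi⟩)
    simp [hh, hxy, hne]

lemma sum_metroP_mul {n : ℕ} (θ : ℝ) (y : Fin n → Bool) (g : (Fin n → Bool) → ℝ) :
    ∑ x, metroP n θ y x * g x =
      (1 / 2 + ((n : ℝ) - numOnes y) / (2 * n) * (1 - θ)) * g y +
      ∑ i, (if y i = true then 1 / (2 * (n : ℝ)) else θ / (2 * n)) * g (flipAt y i) := by
  simp only [metroP_eq, add_mul, Finset.sum_add_distrib, Finset.sum_mul]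
  rw [Finset.sum_comm]
  simp only [ite_mul, zero_mul, Finset.sum_ite_eq', Finset.mem_univ, if_true]
  ring

lemma sum_ite_coord {n : ℕ} (y : Fin n → Bool) (a b : ℝ) :
    ∑ i, (if y i = true then a else b) = a * numOnes y + b * (n - numOnes y) := by
  have h : ∀ i, (if y i = true then a else b) = b + (a - b) * if y i = true then 1 else 0 := by
    intro i
    split_ifs <;> ring
  simp only [h, Finset.sum_add_distrib, ← Finset.mul_sum, ← numOnes_cast]
  simp
  ring

lemma sum_metroP {n : ℕ} (hn : 0 < n) (θ : ℝ) (y : Fin n → Bool) :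
    ∑ x, metroP n θ y x = 1 := by
  have hn' : (n : ℝ) ≠ 0 := by positivity
  have h := sum_metroP_mul θ y fun _ => 1
  simp only [mul_one] at h
  rw [h, sum_ite_coord]
  field_simp
  ring

lemma sum_metroP_mul_numOnes {n : ℕ} (hn : 0 < n) (θ : ℝ) (y : Fin n → Bool) :
    ∑ x, metroP n θ y x * (numOnes x : ℝ) =
      (1 - (1 + θ) / (2 * n)) * numOnes y + θ / 2 := by
  have hn' : (n : ℝ) ≠ 0 := by positivity
  have h : ∀ i, (if y i = true then 1 / (2 * (n : ℝ)) else θ / (2 * n)) *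
      (numOnes (flipAt y i) : ℝ) =
      if y i = true then 1 / (2 * (n : ℝ)) * (numOnes y - 1)
        else θ / (2 * n) * (numOnes y + 1) := by
    intro i
    rw [numOnes_flipAt]
    split_ifs <;> ring
  rw [sum_metroP_mul]
  simp only [h]
  rw [sum_ite_coord]
  field_simp
  ring

lemma metroP_nonneg {n : ℕ} {θ : ℝ} (hθ0 : 0 ≤ θ) (hθ1 : θ ≤ 1) (y x : Fin n → Bool) :
    0 ≤ metroP n θ y x := by
  have h1 : 0 ≤ (n : ℝ) - numOnes y := sub_nonneg.2 (numOnes_le y)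
  have h2 : 0 ≤ 1 - θ := sub_nonneg.2 hθ1
  unfold metroP
  split_ifs <;> positivity

lemma abs_numOnes_sub_le_of_metroP_ne_zero {n : ℕ} {θ : ℝ} {y x : Fin n → Bool}
    (h : metroP n θ y x ≠ 0) : |(numOnes x : ℝ) - numOnes y| ≤ 1 := by
  by_cases hxy : x = y
  · simp [hxy]
  by_cases hh : ham y x = 1
  · obtain ⟨i, rfl⟩ := (ham_eq_one_iff y x).1 hh
    rw [numOnes_flipAt]
    split_ifs <;> simp
  · simp [metroP, hxy, hh] at h

/-- Hoeffding's lemma for a finitely supported centred distribution. -/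
lemma sum_mul_exp_le_of_centered {α : Type*} [Fintype α] {p D : α → ℝ} {c : ℝ} (hc : 0 < c)
    (hp : ∀ a, 0 ≤ p a) (hp1 : ∑ a, p a = 1) (hD : ∑ a, p a * D a = 0)
    (hbd : ∀ a, p a ≠ 0 → |D a| ≤ c) (l : ℝ) :
    ∑ a, p a * Real.exp (l * D a) ≤ Real.exp (l ^ 2 * c ^ 2 / 2) := by
  have key : ∀ a, p a * Real.exp (l * D a) ≤
      p a * Real.cosh (l * c) + p a * D a * (Real.sinh (l * c) / c) := by
    intro a
    by_cases ha : p a = 0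
    · simp [ha]
    obtain ⟨h1, h2⟩ := abs_le.1 (hbd a ha)
    have hconv := convexOn_exp.right (Set.mem_univ (l * c)) (Set.mem_univ (-(l * c)))
      (div_nonneg (by linarith) (by positivity) : 0 ≤ (c + D a) / (2 * c))
      (div_nonneg (by linarith) (by positivity) : 0 ≤ (c - D a) / (2 * c))
      (by field_simp; ring)
    simp only [smul_eq_mul] at hconv
    have hl : (c + D a) / (2 * c) * (l * c) + (c - D a) / (2 * c) * -(l * c) = l * D a := by
      field_simp
      ring
    rw [hl] at hconv
    calc p a * Real.exp (l * D a) ≤ p a * _ := mul_le_mul_of_nonneg_left hconv (hp a)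
      _ = _ := by
        rw [Real.cosh_eq, Real.sinh_eq]
        field_simp
        ring
  calc ∑ a, p a * Real.exp (l * D a)
      ≤ ∑ a, (p a * Real.cosh (l * c) + p a * D a * (Real.sinh (l * c) / c)) :=
        Finset.sum_le_sum fun a _ => key a
    _ = Real.cosh (l * c) := by
        rw [Finset.sum_add_distrib, ← Finset.sum_mul, ← Finset.sum_mul, hp1, hD]
        ring
    _ ≤ Real.exp ((l * c) ^ 2 / 2) := Real.cosh_le_exp_half_sq _
    _ = _ := by rw [mul_pow]

lemma sum_metroP_mul_exp_le {n : ℕ} (hn : 0 < n) {θ : ℝ} (hθ0 : 0 ≤ θ) (hθ1 : θ ≤ 1)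
    (y : Fin n → Bool) (l : ℝ) :
    ∑ x, metroP n θ y x * Real.exp (l * numOnes x) ≤
      Real.exp (l * ((1 - (1 + θ) / (2 * n)) * numOnes y + θ / 2) + 9 / 8 * l ^ 2) := by
  have hn' : (0 : ℝ) < n := by exact_mod_cast hn
  set m : ℝ := (1 - (1 + θ) / (2 * n)) * numOnes y + θ / 2 with hm
  have hbd : ∀ x, metroP n θ y x ≠ 0 → |(numOnes x : ℝ) - m| ≤ 3 / 2 := by
    intro x hx
    obtain ⟨h1, h2⟩ := abs_le.1 (abs_numOnes_sub_le_of_metroP_ne_zero hx)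
    have h3 : 0 ≤ (numOnes y : ℝ) / n := by positivity
    have h4 : (numOnes y : ℝ) / n ≤ 1 := (div_le_one hn').2 (numOnes_le y)
    have h5 : m = numOnes y - (1 + θ) / 2 * ((numOnes y : ℝ) / n) + θ / 2 := by
      rw [hm]
      field_simp
    have h6 : (1 + θ) / 2 * ((numOnes y : ℝ) / n) ≤ (1 + θ) / 2 * 1 :=
      mul_le_mul_of_nonneg_left h4 (by positivity)
    have h7 : 0 ≤ (1 + θ) / 2 * ((numOnes y : ℝ) / n) := by positivity
    rw [abs_le, h5]
    constructor <;> linarith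
  have hD : ∑ x, metroP n θ y x * ((numOnes x : ℝ) - m) = 0 := by
    simp only [mul_sub, Finset.sum_sub_distrib, ← Finset.sum_mul]
    rw [sum_metroP_mul_numOnes hn, sum_metroP hn, one_mul, hm, sub_self]
  have hH := sum_mul_exp_le_of_centered (by norm_num) (metroP_nonneg hθ0 hθ1 y)
    (sum_metroP hn θ y) hD hbd l
  calc ∑ x, metroP n θ y x * Real.exp (l * numOnes x)
      = Real.exp (l * m) * ∑ x, metroP n θ y x * Real.exp (l * ((numOnes x : ℝ) - m)) := by
        rw [Finset.mul_sum]
        refine Finset.sum_congr rfl fun x _ => ?_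
        rw [mul_left_comm, ← Real.exp_add]
        ring_nf
    _ ≤ Real.exp (l * m) * Real.exp (l ^ 2 * (3 / 2) ^ 2 / 2) :=
        mul_le_mul_of_nonneg_left hH (Real.exp_pos _).le
    _ = _ := by
        rw [← Real.exp_add]
        ring_nf

lemma sum_step_mul {α : Type*} [Fintype α] {p q : α → ℝ} {P : α → α → ℝ}
    (hq : ∀ x, q x = ∑ y, p y * P y x) (g : α → ℝ) :
    ∑ x, q x * g x = ∑ y, p y * ∑ x, P y x * g x := by
  simp only [hq, Finset.sum_mul, Finset.mul_sum]
  rw [Finset.sum_comm]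
  simp only [mul_assoc]

/-- Chernoff's bound for a finitely supported distribution whose moment generating function at
`l` is sub-Gaussian. -/
lemma sum_filter_le_exp {α : Type*} [Fintype α] {p f : α → ℝ} (hp : ∀ a, 0 ≤ p a) {m l r b : ℝ}
    (hmgf : ∑ a, p a * Real.exp (l * f a) ≤ Real.exp (l * m + b)) (A : Finset α)
    (hA : ∀ a ∈ A, r ≤ l * (f a - m)) :
    ∑ a ∈ A, p a ≤ Real.exp (b - r) := by
  calc ∑ a ∈ A, p a
      ≤ ∑ a ∈ A, p a * Real.exp (l * f a) * Real.exp (-(l * m) - r) := by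
        refine Finset.sum_le_sum fun a ha => ?_
        rw [mul_assoc, ← Real.exp_add]
        refine le_mul_of_one_le_right (hp a) (Real.one_le_exp ?_)
        linarith [hA a ha]
    _ ≤ ∑ a, p a * Real.exp (l * f a) * Real.exp (-(l * m) - r) :=
        Finset.sum_le_univ_sum_of_nonneg fun a =>
          mul_nonneg (mul_nonneg (hp a) (Real.exp_pos _).le) (Real.exp_pos _).le
    _ ≤ Real.exp (l * m + b) * Real.exp (-(l * m) - r) := by
        rw [← Finset.sum_mul]
        exact mul_le_mul_of_nonneg_right hmgf (Real.exp_pos _).le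
    _ = _ := by
        rw [← Real.exp_add]
        ring_nf

/-- Concentration of `S_t = S(X_t)` for the lazy Metropolis chain started at a
state with `S = v`: both tails at distance `s` from `E_v S_t` have probability
at most `exp(−(2/9) s² (1 − γ²))`, `γ = 1 − (1+θ)/(2n)`. -/
theorem stmt11 (n : ℕ) (hn : 0 < n) (θ : ℝ) (hθ0 : 0 < θ) (hθ1 : θ ≤ 1)
    (x0 : Fin n → Bool)
    (μ : ℕ → (Fin n → Bool) → ℝ)
    (hμ0 : μ 0 = fun x => if x = x0 then 1 else 0)
    (hμ : ∀ t x, μ (t + 1) x = ∑ y, μ t y * metroP n θ y x)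
    (t : ℕ) (s : ℝ) (hs : 0 < s) :
    let γ : ℝ := 1 - (1 + θ) / (2 * n)
    let Ev : ℝ := ∑ x, μ t x * (numOnes x : ℝ)
    (∑ x ∈ Finset.univ.filter (fun x : Fin n → Bool => Ev + s ≤ (numOnes x : ℝ)), μ t x)
        ≤ Real.exp (-(2 / 9) * s ^ 2 * (1 - γ ^ 2)) ∧
    (∑ x ∈ Finset.univ.filter (fun x : Fin n → Bool => (numOnes x : ℝ) ≤ Ev - s), μ t x)
        ≤ Real.exp (-(2 / 9) * s ^ 2 * (1 - γ ^ 2)) := by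
  intro γ Ev
  have hn' : (1 : ℝ) ≤ n := by exact_mod_cast hn
  have hγ1 : γ < 1 := sub_lt_self _ (by positivity)
  have hγ0 : 0 ≤ γ := by
    refine sub_nonneg.2 ((div_le_one (by positivity)).2 ?_)
    linarith
  have hK : 0 < 1 - γ ^ 2 := by nlinarith
  have hpos : ∀ t x, 0 ≤ μ t x := by
    intro t
    induction t with
    | zero =>
      intro x
      rw [hμ0]
      positivity
    | succ t ih =>
      intro x
      rw [hμ]
      exact Finset.sum_nonneg fun y _ => mul_nonneg (ih y) (metroP_nonneg hθ0.le hθ1 y x)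
  have hone : ∀ t, ∑ x, μ t x = 1 := by
    intro t
    induction t with
    | zero => simp [hμ0]
    | succ t ih =>
      have h := sum_step_mul (hμ t) fun _ => 1
      simpa only [mul_one, sum_metroP hn, ih] using h
  have hmean : ∀ t, ∑ x, μ (t + 1) x * (numOnes x : ℝ) =
      γ * ∑ x, μ t x * (numOnes x : ℝ) + θ / 2 := by
    intro t
    rw [sum_step_mul (hμ t)]
    simp only [sum_metroP_mul_numOnes hn, mul_add, Finset.sum_add_distrib]
    rw [← Finset.sum_mul, hone, one_mul, Finset.mul_sum]
    congr 1
    exact Finset.sum_congr rfl fun x _ => mul_left_comm _ _ _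
  have hmgf : ∀ t l, ∑ x, μ t x * Real.exp (l * numOnes x) ≤
      Real.exp (l * ∑ x, μ t x * (numOnes x : ℝ) + 9 / 8 * l ^ 2 / (1 - γ ^ 2)) := by
    intro t
    induction t with
    | zero =>
      intro l
      simp only [hμ0, ite_mul, one_mul, zero_mul, Finset.sum_ite_eq', Finset.mem_univ, if_true]
      refine Real.exp_le_exp.2 (le_add_of_nonneg_right ?_)
      positivity
    | succ t ih =>
      intro l
      rw [sum_step_mul (hμ t), hmean]
      calc ∑ y, μ t y * ∑ x, metroP n θ y x * Real.exp (l * numOnes x)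
          ≤ ∑ y, μ t y * Real.exp (l * (γ * numOnes y + θ / 2) + 9 / 8 * l ^ 2) :=
            Finset.sum_le_sum fun y _ => mul_le_mul_of_nonneg_left
              (sum_metroP_mul_exp_le hn hθ0.le hθ1 y l) (hpos t y)
        _ = (∑ y, μ t y * Real.exp (l * γ * numOnes y)) *
              Real.exp (l * (θ / 2) + 9 / 8 * l ^ 2) := by
            rw [Finset.sum_mul]
            refine Finset.sum_congr rfl fun y _ => ?_
            rw [mul_assoc, ← Real.exp_add]
            ring_nf
        _ ≤ _ := mul_le_mul_of_nonneg_right (ih (l * γ)) (Real.exp_pos _).le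
        _ = _ := by
            rw [← Real.exp_add]
            congr 1
            generalize ∑ x, μ t x * (numOnes x : ℝ) = M
            field_simp
            ring
  have hexp : -(2 / 9) * s ^ 2 * (1 - γ ^ 2) =
      9 / 8 * (4 / 9 * s * (1 - γ ^ 2)) ^ 2 / (1 - γ ^ 2) - 4 / 9 * s * (1 - γ ^ 2) * s := by
    field_simp
    ring
  have hl : 0 ≤ 4 / 9 * s * (1 - γ ^ 2) := by positivity
  rw [hexp]
  constructor
  · refine sum_filter_le_exp (hpos t) (hmgf t _) _ fun x hx => ?_
    rw [Finset.mem_filter] at hx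
    exact mul_le_mul_of_nonneg_left (by linarith [hx.2]) hl
  · rw [← neg_sq (4 / 9 * s * (1 - γ ^ 2))]
    refine sum_filter_le_exp (hpos t) (hmgf t _) _ fun x hx => ?_
    rw [Finset.mem_filter] at hx
    rw [neg_mul, ← mul_neg]
    exact mul_le_mul_of_nonneg_left (by linarith [hx.2]) hl
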